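/- With p₀(n) := 205n² − 160n + 32 and p₃(n) := 123n² − 128n + 32, the series identity ∑_{n≥1} (−1/2^10)^n · ((1)_n)^5 / ((1/2)_n)^5 · [ p₃(n)/(2 n^6) − (H_n − H_{2n}) p₀(n)/n^5 ] = −π⁴/60 holds. -/

import Mathlib

/-!
The rational functions `F n x = (-1)ⁿ n!⁶ (2x + 3n + 2) / ((2n)! ((x + n + 1)ₙ₊₁)⁴)` satisfy
`F (n + 1) x - F n x = G n (x + 1) - G n x` for an explicit `G`. Summing over `n` and over
`x = 0, 1, 2, …` gives the Amdeberhan–Zeilberger series `∑ G n 0 = ∑ F 0 k = 2 ζ(3)`. Since the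
relation holds identically in the real variable `x`, it may be differentiated first: each factor
`1 / (x + a)ₘ⁴` then contributes a harmonic sum, and the same summation yields
`∑ ∂ₓG n 0 = ∑ ∂ₓF 0 k = -6 ζ(4)`, which is four times the claimed identity.
-/

/-- The rising factorial (Pochhammer symbol) `(a)ₙ = a(a+1)⋯(a+n-1)`. -/
noncomputable def risingFactorial (a : ℝ) (n : ℕ) : ℝ :=
  ∏ i ∈ Finset.range n, (a + i)

/-- The generalized harmonic number `H_n^{(s)} = ∑_{k=1}^n 1/k^s`. -/
noncomputable def genHarmonic (s n : ℕ) : ℝ :=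
  ∑ k ∈ Finset.range n, 1 / ((k : ℝ) + 1) ^ s

open Finset Filter Polynomial Topology
open scoped Nat

theorem tendsto_sum_of_wz_pair {E : Type*} [AddCommGroup E] [TopologicalSpace E]
    [IsTopologicalAddGroup E] [T2Space E] {F G : ℕ → ℕ → E}
    (hFG : ∀ n k, F (n + 1) k - F n k = G n (k + 1) - G n k) (hF : ∀ n, Summable (F n))
    (hF0 : Tendsto (fun n ↦ ∑' k, F n k) atTop (𝓝 0)) (hG : ∀ n, Tendsto (G n) atTop (𝓝 0)) :
    Tendsto (fun N ↦ ∑ n ∈ range N, G n 0) atTop (𝓝 (∑' k, F 0 k)) := by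
  have sum_F_step (n : ℕ) : ∑' k, F n k - ∑' k, F (n + 1) k = G n 0 := by
    have telescoped : Tendsto (fun K ↦ ∑ k ∈ range K, (F n k - F (n + 1) k)) atTop
        (𝓝 (G n 0)) := by
      have partial_sum (K : ℕ) : ∑ k ∈ range K, (F n k - F (n + 1) k) = G n 0 - G n K := by
        simp_rw [← neg_sub (F (n + 1) _), hFG, neg_sub]
        exact sum_range_sub' (G n) K
      simpa only [partial_sum, sub_zero] using (hG n).const_sub (G n 0)
    rw [← (hF n).tsum_sub (hF (n + 1))]
    exact tendsto_nhds_unique ((hF n).sub (hF (n + 1))).hasSum.tendsto_sum_nat telescoped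
  simp_rw [← sum_F_step, sum_range_sub' fun n ↦ ∑' k, F n k]
  simpa only [sub_zero] using hF0.const_sub (∑' k, F 0 k)

theorem risingFactorial_succ (a : ℝ) (m : ℕ) :
    risingFactorial a (m + 1) = risingFactorial a m * (a + m) :=
  prod_range_succ _ _

theorem risingFactorial_succ' (a : ℝ) (m : ℕ) :
    risingFactorial a (m + 1) = a * risingFactorial (a + 1) m := by
  simp only [risingFactorial, prod_range_succ', Nat.cast_add, Nat.cast_one, Nat.cast_zero, add_zero,
    mul_comm a, add_assoc, add_comm (1 : ℝ)]

theorem risingFactorial_pos {a : ℝ} (ha : 0 < a) (m : ℕ) : 0 < risingFactorial a m :=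
  prod_pos fun _ _ ↦ by positivity

theorem risingFactorial_one (n : ℕ) : risingFactorial 1 n = n ! := by
  rw [← prod_range_add_one_eq_factorial]
  push_cast
  exact prod_congr rfl fun _ _ ↦ add_comm _ _

theorem factorial_mul_risingFactorial (n m : ℕ) :
    n ! * risingFactorial (n + 1) m = (n + m)! := by
  induction m with
  | zero => simp [risingFactorial]
  | succ m ih =>
    rw [risingFactorial_succ, ← mul_assoc, ih, ← add_assoc, Nat.factorial_succ]
    push_cast
    ring

theorem risingFactorial_half (n : ℕ) :
    risingFactorial (1 / 2) n = (2 * n)! / (4 ^ n * n !) := by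
  induction n with
  | zero => simp [risingFactorial]
  | succ n ih =>
    rw [risingFactorial_succ, ih, Nat.mul_succ, Nat.factorial_succ, Nat.factorial_succ,
      Nat.factorial_succ]
    push_cast
    field_simp
    ring

theorem pow_mul_factorial_le_risingFactorial {a : ℝ} (ha : 1 ≤ a) (k m : ℕ) :
    a ^ k * m ! ≤ risingFactorial a (m + k) := by
  induction m with
  | zero =>
    simpa [risingFactorial] using
      prod_le_prod (s := range k) (fun _ _ ↦ by positivity) fun i _ ↦
        le_add_of_nonneg_right (a := a) (i.cast_nonneg)
  | succ m ih =>
    rw [Nat.add_right_comm, risingFactorial_succ, Nat.factorial_succ]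
    push_cast
    calc a ^ k * ((m + 1) * m !) = a ^ k * m ! * (m + 1) := by ring
      _ ≤ risingFactorial a (m + k) * (a + (m + k)) := by
        have := (risingFactorial_pos (by positivity : 0 < a) (m + k)).le
        gcongr ?_ * ?_
        linarith [k.cast_nonneg (α := ℝ)]

theorem hasDerivAt_risingFactorial {a : ℝ} (ha : 0 < a) (m : ℕ) :
    HasDerivAt (risingFactorial · m) (risingFactorial a m * ∑ i ∈ range m, 1 / (a + i)) a := by
  induction m with
  | zero => simpa [risingFactorial] using hasDerivAt_const a (1 : ℝ)
  | succ m ih =>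
    have ham : a + m ≠ 0 := by positivity
    simp_rw [risingFactorial_succ, sum_range_succ]
    refine (ih.mul ((hasDerivAt_id a).add_const (m : ℝ))).congr_deriv ?_
    simp only [id]
    field_simp

theorem hasDerivAt_div_risingFactorial_pow {p : ℝ → ℝ} {p' a x : ℝ} (hp : HasDerivAt p p' x)
    (hx : 0 < x + a) (m s : ℕ) :
    HasDerivAt (fun y ↦ p y / risingFactorial (y + a) m ^ s)
      ((p' - s * p x * ∑ i ∈ range m, 1 / (x + a + i)) / risingFactorial (x + a) m ^ s) x := by
  have hne := (risingFactorial_pos hx m).ne'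
  have hpow := ((hasDerivAt_risingFactorial hx m).comp_add_const x a).fun_pow s
  refine (hp.fun_div hpow (pow_ne_zero s hne)).congr_deriv ?_
  rcases s with _ | s
  · simp
  · rw [Nat.add_sub_cancel]
    field_simp
    ring

theorem genHarmonic_one_add_sub (n m : ℕ) :
    genHarmonic 1 (n + m) - genHarmonic 1 n = ∑ i ∈ range m, 1 / ((n : ℝ) + 1 + i) := by
  simp [genHarmonic, sum_range_add, add_right_comm]

theorem sum_one_div_add_le {a : ℝ} (ha : 0 < a) (m : ℕ) :
    ∑ i ∈ range m, 1 / (a + i) ≤ m / a := by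
  calc ∑ i ∈ range m, 1 / (a + i) ≤ ∑ _i ∈ range m, 1 / a := by
        gcongr
        exact le_add_of_nonneg_right (Nat.cast_nonneg _)
    _ = m / a := by simp [div_eq_mul_inv]

/-- The factor `(-1)ⁿ n!⁶ / (2n)!` shared by both members of the Wilf–Zeilberger pair. -/
noncomputable def wzWeight (n : ℕ) : ℝ :=
  (-1) ^ n * (n ! ^ 6 / (2 * n)!)

/-- The polynomial numerator of `wzCompanion n`, as returned by Gosper's algorithm applied to
`wzKernel (n + 1) - wzKernel n`; the parameter `j` stands for `n + 1`. -/
noncomputable def wzNumerator (j : ℝ) : ℝ[X] :=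
  C 2 * X ^ 6 + C (26 * j - 4) * X ^ 5 + C (141 * j ^ 2 - 42 * j + 2) * X ^ 4 +
    C (j * (408 * j ^ 2 - 176 * j + 16)) * X ^ 3 +
    C (j ^ 2 * (664 * j ^ 2 - 368 * j + 48)) * X ^ 2 +
    C (j ^ 3 * (574 * j ^ 2 - 384 * j + 64)) * X + C (j ^ 4 * (205 * j ^ 2 - 160 * j + 32))

/-- The first member of the Wilf–Zeilberger pair behind the Amdeberhan–Zeilberger series for
`ζ(3)`, with the second index extended to a real variable. -/
noncomputable def wzKernel (n : ℕ) (x : ℝ) : ℝ :=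
  wzWeight n * ((2 * x + (3 * n + 2)) / risingFactorial (x + (n + 1)) (n + 1) ^ 4)

/-- The second member of the Wilf–Zeilberger pair, the companion of `wzKernel`. -/
noncomputable def wzCompanion (n : ℕ) (x : ℝ) : ℝ :=
  wzWeight n / (4 * n + 2) *
    ((wzNumerator (n + 1)).eval x / risingFactorial (x + (n + 1)) (n + 2) ^ 4)

theorem wzWeight_succ (n : ℕ) :
    wzWeight (n + 1) = -wzWeight n * ((n + 1) ^ 5 / (4 * n + 2)) := by
  rw [wzWeight, wzWeight, Nat.mul_succ, Nat.factorial_succ, Nat.factorial_succ, Nat.factorial_succ]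
  push_cast
  field_simp
  ring

theorem wzKernel_succ_sub_wzKernel (n : ℕ) {x : ℝ} (hx : -1 < x) :
    wzKernel (n + 1) x - wzKernel n x = wzCompanion n (x + 1) - wzCompanion n x := by
  set a := x + (n + 1) with ha
  have ha0 : 0 < a := by rw [ha]; linarith [n.cast_nonneg (α := ℝ)]
  have hR : 0 < risingFactorial (a + 1) n := risingFactorial_pos (by positivity) n
  have shift : x + 1 + (n + 1) = a + 1 := by ring
  have shift' : x + ((n + 1 : ℕ) + 1) = a + 1 := by push_cast; ring
  have hx' : x = a - (n + 1) := by ring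
  simp only [wzKernel, wzCompanion, wzWeight_succ, shift, shift', ← ha]
  rw [risingFactorial_succ (a + 1) (n + 1), risingFactorial_succ (a + 1) n,
    risingFactorial_succ' a (n + 1), risingFactorial_succ (a + 1) n, risingFactorial_succ' a n]
  simp only [wzNumerator, eval_add, eval_mul, eval_pow, eval_C, eval_X, hx']
  push_cast
  field_simp
  ring

theorem hasDerivAt_wzKernel (n : ℕ) {x : ℝ} (hx : -1 < x) :
    HasDerivAt (wzKernel n)
      (wzWeight n * ((2 - 4 * (2 * x + (3 * n + 2)) *
        ∑ i ∈ range (n + 1), 1 / (x + (n + 1) + i)) /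
          risingFactorial (x + (n + 1)) (n + 1) ^ 4)) x := by
  have linear : HasDerivAt (fun y : ℝ ↦ 2 * y + (3 * n + 2)) 2 x := by
    simpa using ((hasDerivAt_id x).const_mul (2 : ℝ)).add_const (3 * n + 2 : ℝ)
  exact (hasDerivAt_div_risingFactorial_pow linear
    (by linarith [n.cast_nonneg (α := ℝ)]) (n + 1) 4).const_mul _

theorem hasDerivAt_wzCompanion (n : ℕ) {x : ℝ} (hx : -1 < x) :
    HasDerivAt (wzCompanion n)
      (wzWeight n / (4 * n + 2) * (((wzNumerator (n + 1)).derivative.eval x -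
        4 * (wzNumerator (n + 1)).eval x * ∑ i ∈ range (n + 2), 1 / (x + (n + 1) + i)) /
          risingFactorial (x + (n + 1)) (n + 2) ^ 4)) x :=
  (hasDerivAt_div_risingFactorial_pow ((wzNumerator (n + 1)).hasDerivAt x)
    (by linarith [n.cast_nonneg (α := ℝ)]) (n + 2) 4).const_mul _

theorem deriv_wzKernel_succ_sub_deriv_wzKernel (n : ℕ) {x : ℝ} (hx : -1 < x) :
    deriv (wzKernel (n + 1)) x - deriv (wzKernel n) x =
      deriv (wzCompanion n) (x + 1) - deriv (wzCompanion n) x := by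
  have kernel_side := (hasDerivAt_wzKernel (n + 1) hx).differentiableAt.hasDerivAt.sub
    (hasDerivAt_wzKernel n hx).differentiableAt.hasDerivAt
  have companion_side := ((hasDerivAt_wzCompanion n
    (by linarith : -1 < x + 1)).differentiableAt.hasDerivAt.comp_add_const x 1).sub
    (hasDerivAt_wzCompanion n hx).differentiableAt.hasDerivAt
  refine kernel_side.unique (companion_side.congr_of_eventuallyEq ?_)
  filter_upwards [lt_mem_nhds hx] with y hy using wzKernel_succ_sub_wzKernel n hy

theorem abs_wzWeight_mul_le (n k : ℕ) {a : ℝ} (ha : 1 ≤ a) (b : ℝ) :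
    |wzWeight n * (b / risingFactorial a (n + k) ^ 4)| ≤ |b| / (a ^ k) ^ 4 := by
  have hR : 0 < risingFactorial a (n + k) := risingFactorial_pos (by positivity) _
  have factorial_sq_le : (n ! : ℝ) ^ 2 ≤ (2 * n)! := by
    rw [sq, two_mul]
    exact_mod_cast Nat.le_of_dvd (Nat.factorial_pos _)
      (Nat.factorial_mul_factorial_dvd_factorial_add n n)
  calc |wzWeight n * (b / risingFactorial a (n + k) ^ 4)|
      = n ! ^ 6 / (2 * n)! * (|b| / risingFactorial a (n + k) ^ 4) := by
        simp only [wzWeight, abs_mul, abs_div, abs_pow, abs_neg, abs_one, one_pow, one_mul,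
          Nat.abs_cast, abs_of_pos hR]
    _ ≤ n ! ^ 6 / n ! ^ 2 * (|b| / (a ^ k * n !) ^ 4) := by
        gcongr
        exact pow_mul_factorial_le_risingFactorial ha k n
    _ = |b| / (a ^ k) ^ 4 := by field_simp

theorem abs_deriv_wzKernel_le (n : ℕ) {x : ℝ} (hx : 0 ≤ x) :
    |deriv (wzKernel n) x| ≤ 14 / (x + (n + 1)) ^ 3 := by
  set a := x + (n + 1) with ha
  have ha1 : 1 ≤ a := by linarith [n.cast_nonneg (α := ℝ)]
  have harmonic_le : ∑ i ∈ range (n + 1), 1 / (a + i) ≤ 1 :=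
    (sum_one_div_add_le (by positivity) _).trans <|
      (div_le_one (by positivity)).2 (by push_cast; linarith)
  have numerator_le : |2 - 4 * (2 * x + (3 * n + 2)) * ∑ i ∈ range (n + 1), 1 / (a + i)| ≤
      14 * a := by
    calc _ ≤ |(2 : ℝ)| + |4 * (2 * x + (3 * n + 2)) * ∑ i ∈ range (n + 1), 1 / (a + i)| :=
          abs_sub _ _
      _ ≤ 2 + 4 * (3 * a) * 1 := by
          rw [abs_of_nonneg (by positivity), abs_of_nonneg (by positivity)]
          gcongr
          linarith
      _ ≤ 14 * a := by linarith
  rw [(hasDerivAt_wzKernel n (by linarith)).deriv]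
  calc _ ≤ _ / (a ^ 1) ^ 4 := abs_wzWeight_mul_le n 1 ha1 _
    _ ≤ 14 * a / (a ^ 1) ^ 4 := by gcongr
    _ = 14 / a ^ 3 := by field_simp

section wzNumerator

variable {j x : ℝ}

theorem eval_wzNumerator_mem_Icc (hj : 1 ≤ j) (hx : 0 ≤ x) :
    (wzNumerator j).eval x ∈ Set.Icc 0 (205 * (x + j) ^ 6) := by
  -- In `t = j - 1` and `x`, the value and its distance to the bound have no negative coefficient.
  obtain ⟨t, rfl⟩ : ∃ t, j = t + 1 := ⟨j - 1, by ring⟩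
  have ht : 0 ≤ t := by linarith
  simp only [wzNumerator, eval_add, eval_mul, eval_pow, eval_C, eval_X]
  constructor
  · ring_nf
    positivity
  · rw [← sub_nonneg]
    ring_nf
    positivity

theorem eval_derivative_wzNumerator_mem_Icc (hj : 1 ≤ j) (hx : 0 ≤ x) :
    (wzNumerator j).derivative.eval x ∈ Set.Icc 0 (574 * (x + j) ^ 5) := by
  obtain ⟨t, rfl⟩ : ∃ t, j = t + 1 := ⟨j - 1, by ring⟩
  have ht : 0 ≤ t := by linarith
  simp only [wzNumerator, derivative_add, derivative_C_mul, derivative_X_pow, derivative_X,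
    derivative_C, eval_add, eval_mul, eval_pow, eval_C, eval_X, eval_one, eval_zero]
  constructor
  · ring_nf
    positivity
  · rw [← sub_nonneg]
    ring_nf
    positivity

end wzNumerator

theorem abs_deriv_wzCompanion_le (n : ℕ) {x : ℝ} (hx : 0 ≤ x) :
    |deriv (wzCompanion n) x| ≤ 2214 / (x + (n + 1)) ^ 2 := by
  have hn : (0 : ℝ) ≤ n := n.cast_nonneg
  obtain ⟨P_nonneg, P_le⟩ := eval_wzNumerator_mem_Icc (le_add_of_nonneg_left hn) hx
  obtain ⟨derivative_nonneg, derivative_le⟩ :=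
    eval_derivative_wzNumerator_mem_Icc (le_add_of_nonneg_left hn) hx
  set a := x + (n + 1) with ha
  set P := (wzNumerator (n + 1)).eval x
  set P' := (wzNumerator (n + 1)).derivative.eval x
  have ha1 : 1 ≤ a := by linarith
  have harmonic_le : ∑ i ∈ range (n + 2), 1 / (a + i) ≤ 2 :=
    (sum_one_div_add_le (by positivity) _).trans <|
      (div_le_iff₀ (by positivity)).2 (by push_cast; linarith)
  have numerator_le : |P' - 4 * P * ∑ i ∈ range (n + 2), 1 / (a + i)| ≤ 2214 * a ^ 6 := by
    calc _ ≤ |P'| + |4 * P * ∑ i ∈ range (n + 2), 1 / (a + i)| := abs_sub _ _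
      _ ≤ 574 * a ^ 5 + 4 * (205 * a ^ 6) * 2 := by
          rw [abs_of_nonneg derivative_nonneg, abs_of_nonneg (by positivity)]
          gcongr
      _ ≤ 574 * a ^ 6 + 4 * (205 * a ^ 6) * 2 := by
          gcongr
          norm_num
      _ = 2214 * a ^ 6 := by ring
  have one_le_abs : 1 ≤ |4 * (n : ℝ) + 2| := (le_abs_self _).trans' (by linarith)
  rw [(hasDerivAt_wzCompanion n (by linarith)).deriv, div_mul_eq_mul_div, abs_div]
  calc _ ≤ |wzWeight n * (_ / risingFactorial a (n + 2) ^ 4)| :=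
        div_le_self (abs_nonneg _) one_le_abs
    _ ≤ _ / (a ^ 2) ^ 4 := abs_wzWeight_mul_le n 2 ha1 _
    _ ≤ 2214 * a ^ 6 / (a ^ 2) ^ 4 := by gcongr
    _ = 2214 / a ^ 2 := by field_simp

theorem summable_one_div_succ_sq : Summable fun k : ℕ ↦ 1 / ((k : ℝ) + 1) ^ 2 := by
  exact_mod_cast (summable_nat_add_iff 1).2 (Real.summable_one_div_nat_pow.2 one_lt_two)

theorem deriv_wzKernel_zero {x : ℝ} (hx : -1 < x) :
    deriv (wzKernel 0) x = -6 * (1 / (x + 1) ^ 4) := by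
  have hx1 : x + 1 ≠ 0 := by linarith
  rw [(hasDerivAt_wzKernel 0 hx).deriv]
  simp only [wzWeight, risingFactorial, pow_zero, mul_zero, Nat.factorial_zero, Nat.cast_zero,
    Nat.cast_one, one_pow, zero_add, add_zero, range_one, prod_singleton, sum_singleton]
  field_simp
  ring

theorem abs_deriv_wzKernel_add_le (n k : ℕ) {x : ℝ} (hx : 0 ≤ x) :
    |deriv (wzKernel n) (x + k)| ≤ 14 * (1 / ((n : ℝ) + 1)) * (1 / ((k : ℝ) + 1) ^ 2) := by
  calc |deriv (wzKernel n) (x + k)| ≤ 14 / (x + k + (n + 1)) ^ 3 :=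
        abs_deriv_wzKernel_le n (by positivity)
    _ = 14 / ((x + k + (n + 1)) * (x + k + (n + 1)) ^ 2) := by ring
    _ ≤ 14 / ((n + 1) * (k + 1) ^ 2) := by
      gcongr 14 / (?_ * ?_ ^ 2) <;>
        linarith [n.cast_nonneg (α := ℝ), k.cast_nonneg (α := ℝ)]
    _ = _ := by field_simp

theorem summable_deriv_wzKernel_add (n : ℕ) {x : ℝ} (hx : 0 ≤ x) :
    Summable fun k : ℕ ↦ deriv (wzKernel n) (x + k) :=
  .of_norm_bounded (summable_one_div_succ_sq.mul_left _) fun k ↦ abs_deriv_wzKernel_add_le n k hx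

theorem tendsto_tsum_deriv_wzKernel_add {x : ℝ} (hx : 0 ≤ x) :
    Tendsto (fun n ↦ ∑' k : ℕ, deriv (wzKernel n) (x + k)) atTop (𝓝 0) := by
  refine squeeze_zero_norm (fun n ↦ tsum_of_norm_bounded
    (summable_one_div_succ_sq.hasSum.mul_left _) (fun k ↦ abs_deriv_wzKernel_add_le n k hx)) ?_
  simpa only [mul_zero, zero_mul] using
    ((tendsto_one_div_add_atTop_nhds_zero_nat (𝕜 := ℝ)).const_mul 14).mul_const
      (∑' k : ℕ, 1 / ((k : ℝ) + 1) ^ 2)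

theorem tendsto_deriv_wzCompanion_add (n : ℕ) {x : ℝ} (hx : 0 ≤ x) :
    Tendsto (fun k : ℕ ↦ deriv (wzCompanion n) (x + k)) atTop (𝓝 0) := by
  refine squeeze_zero_norm (fun k ↦ ?_)
    (by simpa only [mul_zero] using summable_one_div_succ_sq.tendsto_atTop_zero.const_mul 2214)
  calc |deriv (wzCompanion n) (x + k)| ≤ 2214 / (x + k + (n + 1)) ^ 2 :=
        abs_deriv_wzCompanion_le n (by positivity)
    _ ≤ 2214 * (1 / (k + 1) ^ 2) := by
      rw [mul_one_div]
      gcongr 2214 / ?_ ^ 2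
      linarith [n.cast_nonneg (α := ℝ)]

theorem summable_deriv_wzCompanion {x : ℝ} (hx : 0 ≤ x) :
    Summable fun n ↦ deriv (wzCompanion n) x := by
  refine .of_norm_bounded (summable_one_div_succ_sq.mul_left 2214) fun n ↦
    (abs_deriv_wzCompanion_le n hx).trans ?_
  rw [mul_one_div]
  gcongr 2214 / ?_ ^ 2
  linarith

theorem hasSum_deriv_wzCompanion {x : ℝ} (hx : 0 ≤ x) :
    HasSum (fun n ↦ deriv (wzCompanion n) x) (-6 * ∑' k : ℕ, 1 / (x + k + 1) ^ 4) := by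
  have wz (n k : ℕ) : deriv (wzKernel (n + 1)) (x + k) - deriv (wzKernel n) (x + k) =
      deriv (wzCompanion n) (x + (k + 1 : ℕ)) - deriv (wzCompanion n) (x + k) := by
    rw [deriv_wzKernel_succ_sub_deriv_wzKernel n (by linarith [k.cast_nonneg (α := ℝ)]),
      Nat.cast_succ, add_assoc]
  have limit := tendsto_sum_of_wz_pair wz (fun n ↦ summable_deriv_wzKernel_add n hx)
    (tendsto_tsum_deriv_wzKernel_add hx) (fun n ↦ tendsto_deriv_wzCompanion_add n hx)
  have initial (k : ℕ) : deriv (wzKernel 0) (x + k) = -6 * (1 / (x + k + 1) ^ 4) :=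
    deriv_wzKernel_zero (by linarith [k.cast_nonneg (α := ℝ)])
  simp only [initial, tsum_mul_left, Nat.cast_zero, add_zero] at limit
  exact (summable_deriv_wzCompanion hx).hasSum_iff_tendsto_nat.2 limit

theorem tsum_one_div_succ_pow_four : ∑' k : ℕ, 1 / ((k : ℝ) + 1) ^ 4 = Real.pi ^ 4 / 90 := by
  simpa using ((hasSum_nat_add_iff' 1).2 hasSum_zeta_four).tsum_eq

theorem summand_eq_deriv_wzCompanion_zero (n : ℕ) :
    (-1 / 2 ^ 10 : ℝ) ^ (n + 1) * (risingFactorial 1 (n + 1)) ^ 5 /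
        (risingFactorial (1 / 2) (n + 1)) ^ 5 *
        ((123 * ((n : ℝ) + 1) ^ 2 - 128 * ((n : ℝ) + 1) + 32) / (2 * ((n : ℝ) + 1) ^ 6) -
          (genHarmonic 1 (n + 1) - genHarmonic 1 (2 * (n + 1))) *
            (205 * ((n : ℝ) + 1) ^ 2 - 160 * ((n : ℝ) + 1) + 32) / ((n : ℝ) + 1) ^ 5) =
      deriv (wzCompanion n) 0 / 4 := by
  have pow_eq : (-1 / 2 ^ 10 : ℝ) ^ (n + 1) = -(-1) ^ n / (4 ^ (n + 1)) ^ 5 := by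
    rw [pow_right_comm, div_pow, pow_succ, mul_neg_one]
    norm_num
  have harmonic_eq : ∑ i ∈ range (n + 2), 1 / ((n : ℝ) + 1 + i) =
      genHarmonic 1 (2 * (n + 1)) - genHarmonic 1 (n + 1) + 1 / (n + 1) := by
    have last := genHarmonic_one_add_sub n 1
    rw [← genHarmonic_one_add_sub, show n + (n + 2) = 2 * (n + 1) by ring]
    simp only [range_one, sum_singleton, Nat.cast_zero, add_zero] at last
    linarith
  have rising_eq : risingFactorial (n + 1) (n + 2) = (2 * (n + 1))! / n ! := by
    rw [eq_div_iff (by positivity), mul_comm, factorial_mul_risingFactorial]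
    congr 2
    ring
  have two_mul_factorial : ((2 * (n + 1))! : ℝ) = (2 * n + 2) * ((2 * n + 1) * (2 * n)!) := by
    rw [Nat.mul_succ, Nat.factorial_succ, Nat.factorial_succ]
    push_cast
    ring
  rw [(hasDerivAt_wzCompanion n (by norm_num)).deriv, zero_add, harmonic_eq, rising_eq,
    risingFactorial_one, risingFactorial_half, pow_eq, two_mul_factorial, Nat.factorial_succ]
  simp only [wzWeight, wzNumerator, derivative_add, derivative_C_mul, derivative_X_pow,
    derivative_X, derivative_C, eval_add, eval_mul, eval_pow, eval_C, eval_X, eval_one, eval_zero]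
  push_cast
  field_simp
  ring

/-- With `p₀(n) = 205n²−160n+32` and `p₃(n) = 123n²−128n+32`:
`∑_{n≥1} (−1/2^10)^n (1)ₙ^5/(1/2)ₙ^5 [ p₃(n)/(2n^6) − (Hₙ − H_{2n})p₀(n)/n^5 ] = −π⁴/60`. -/
theorem wz_pi4_60_series :
    ∑' n : ℕ, ((-1 / 2 ^ 10 : ℝ) ^ (n + 1) * (risingFactorial 1 (n + 1)) ^ 5 /
        (risingFactorial (1 / 2) (n + 1)) ^ 5 *
        ((123 * ((n : ℝ) + 1) ^ 2 - 128 * ((n : ℝ) + 1) + 32) / (2 * ((n : ℝ) + 1) ^ 6) -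
          (genHarmonic 1 (n + 1) - genHarmonic 1 (2 * (n + 1))) *
            (205 * ((n : ℝ) + 1) ^ 2 - 160 * ((n : ℝ) + 1) + 32) / ((n : ℝ) + 1) ^ 5))
      = -Real.pi ^ 4 / 60 := by
  have hasSum := (hasSum_deriv_wzCompanion le_rfl).div_const 4
  simp_rw [zero_add, tsum_one_div_succ_pow_four] at hasSum
  simp_rw [summand_eq_deriv_wzCompanion_zero, hasSum.tsum_eq]
  ring
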